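/- arXiv:2506.07701 — 2 statements merged into one kernel-verified Lean document; each statement's English description precedes it below -/
import Mathlib

section
/- For any qubit states ρ_{ab} (2×2 complex positive semidefinite matrices of trace 1), for a,b ∈ {0,1}, and any two binary POVMs {M₁₀, M₁₁} and {M₂₀, M₂₁} (2×2 complex positive semidefinite matrices with M_{i0} + M_{i1} = I for i = 1,2), the average guessing probability of the 2→1 random access code satisfies (1/8) Σ_{a,b∈{0,1}} ( Re Tr[M_{1a} ρ_{ab}] + Re Tr[M_{2b} ρ_{ab}] ) ≤ (1/2)(1 + 1/√2). -/
/-!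
Write each matrix in Bloch form `t + x σ_x + y σ_y + z σ_z`. Positive semidefiniteness says that
the vector `(x, y, z)` has length at most `t` (`exists_bloch`). Thus a state has `t = 1/2` and a
vector `r/2` with `|r| ≤ 1`, while the two effects of a binary POVM have opposite vectors `± v`
with `|v| ≤ min t (1 - t) ≤ 1/2`. The sum over words and questions is then
`4 + ∑ r_ab · ((-1)^a v₀ + (-1)^b v₁)`. By the inequality of arithmetic and geometric means each
inner product satisfies `r · w ≤ (√2 |w|² + |r|² / √2) / 2` (`inner_le`); by the parallelogram law
the four vectors `w` have total squared length `4 (|v₀|² + |v₁|²) ≤ 2`, so that the sum is at most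
`4 + 2 √2`.
-/

open Matrix
open scoped ComplexOrder

/-- The Hermitian matrix `t + x σ_x + y σ_y + z σ_z`, with `σ` the Pauli matrices. -/
def bloch (t x y z : ℝ) : Matrix (Fin 2) (Fin 2) ℂ :=
  !![⟨t + z, 0⟩, ⟨x, -y⟩; ⟨x, y⟩, ⟨t - z, 0⟩]

/-- The inequality on the Bloch vector is the nonnegativity of the determinant. -/
theorem exists_bloch {A : Matrix (Fin 2) (Fin 2) ℂ} (hA : A.PosSemidef) :
    ∃ t x y z : ℝ, A = bloch t x y z ∧ 0 ≤ t ∧ x ^ 2 + y ^ 2 + z ^ 2 ≤ t ^ 2 := by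
  have h0 := Complex.le_def.1 (hA.diag_nonneg (i := 0))
  have h1 := Complex.le_def.1 (hA.diag_nonneg (i := 1))
  have hd := (Complex.le_def.1 hA.det_nonneg).1
  have h10 : star (A 1 0) = A 0 1 := hA.isHermitian.apply 0 1
  have hre := congrArg Complex.re h10
  have him := congrArg Complex.im h10
  simp at h0 h1 hre him
  rw [Matrix.det_fin_two] at hd
  simp [← h0.2, ← h1.2, ← hre, ← him] at hd
  refine ⟨((A 0 0).re + (A 1 1).re) / 2, (A 1 0).re, (A 1 0).im,
    ((A 0 0).re - (A 1 1).re) / 2, ?_, by linarith [h0.1, h1.1], by nlinarith⟩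
  ext i j
  fin_cases i <;> fin_cases j <;> apply Complex.ext <;>
    simp [bloch, ← h0.2, ← h1.2, ← hre, ← him] <;> ring

theorem trace_bloch_mul (t x y z t' x' y' z' : ℝ) :
    ((bloch t x y z * bloch t' x' y' z').trace).re
      = 2 * (t * t' + x * x' + y * y' + z * z') := by
  simp [bloch, Matrix.trace_fin_two]
  ring

/-- A state is `(1 + r · σ) / 2` with `r` in the unit ball. -/
theorem exists_bloch_state {A : Matrix (Fin 2) (Fin 2) ℂ} (hA : A.PosSemidef ∧ A.trace = 1) :
    ∃ x y z : ℝ, A = bloch (1 / 2) (x / 2) (y / 2) (z / 2) ∧ x ^ 2 + y ^ 2 + z ^ 2 ≤ 1 := by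
  obtain ⟨t, x, y, z, rfl, -, h⟩ := exists_bloch hA.1
  have ht := congrArg Complex.re hA.2
  simp [bloch, Matrix.trace_fin_two] at ht
  obtain rfl : t = 1 / 2 := by linarith
  refine ⟨2 * x, 2 * y, 2 * z, ?_, by linarith⟩
  congr 1 <;> ring

/-- The two effects of a binary POVM have opposite vectors, of length at most `1 / 2`. -/
theorem exists_bloch_povm {A B : Matrix (Fin 2) (Fin 2) ℂ} (hA : A.PosSemidef)
    (hB : B.PosSemidef) (hAB : A + B = 1) :
    ∃ t x y z : ℝ, A = bloch t x y z ∧ B = bloch (1 - t) (-x) (-y) (-z) ∧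
      x ^ 2 + y ^ 2 + z ^ 2 ≤ 1 / 4 := by
  obtain ⟨t, x, y, z, rfl, ht, h⟩ := exists_bloch hA
  obtain ⟨t', x', y', z', rfl, ht', h'⟩ := exists_bloch hB
  have e00 := congrArg Complex.re (congrFun (congrFun hAB 0) 0)
  have e11 := congrArg Complex.re (congrFun (congrFun hAB 1) 1)
  have e10 := congrFun (congrFun hAB 1) 0
  have ere := congrArg Complex.re e10
  have eim := congrArg Complex.im e10
  simp [bloch] at e00 e11 ere eim
  obtain rfl : t' = 1 - t := by linarith
  obtain rfl : x' = -x := by linarith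
  obtain rfl : y' = -y := by linarith
  obtain rfl : z' = -z := by linarith
  refine ⟨t, x, y, z, rfl, rfl, ?_⟩
  -- The squared length is at most `min t (1 - t) ^ 2`, hence at most `t * (1 - t) ≤ 1 / 4`.
  rcases le_total t (1 / 2) with hl | hl <;> nlinarith

/-- The weight `√2` gives equality for a unit vector `r` parallel to `w` with `|w| = 1 / √2`. -/
theorem inner_le (x y z a b c : ℝ) (h : x ^ 2 + y ^ 2 + z ^ 2 ≤ 1) :
    x * a + y * b + z * c ≤ √2 / 2 * (a ^ 2 + b ^ 2 + c ^ 2) + √2 / 4 := by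
  have h2 : √2 * √2 = 2 := Real.mul_self_sqrt (by norm_num)
  have hs : 0 ≤ √2 := Real.sqrt_nonneg 2
  have key : 0 ≤ √2 * ((x - √2 * a) ^ 2 + (y - √2 * b) ^ 2 + (z - √2 * c) ^ 2) := by positivity
  have e : √2 * ((x - √2 * a) ^ 2 + (y - √2 * b) ^ 2 + (z - √2 * c) ^ 2)
      = √2 * (x ^ 2 + y ^ 2 + z ^ 2) - 4 * (x * a + y * b + z * c)
        + 2 * √2 * (a ^ 2 + b ^ 2 + c ^ 2) := by
    linear_combination (-2 * (x * a + y * b + z * c) + √2 * (a ^ 2 + b ^ 2 + c ^ 2)) * h2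
  linarith [mul_le_mul_of_nonneg_left h hs]

/-- The quantum bound `(1 + 1/√2)/2` on the average guessing probability of the
`2 → 1` random access code with qubit states and binary POVMs. -/
theorem stmt5 (ρ : Fin 2 → Fin 2 → Matrix (Fin 2) (Fin 2) ℂ)
    (M : Fin 2 → Fin 2 → Matrix (Fin 2) (Fin 2) ℂ)
    (hρ : ∀ a b, (ρ a b).PosSemidef ∧ (ρ a b).trace = 1)
    (hM : ∀ i c, (M i c).PosSemidef)
    (hPOVM : ∀ i, M i 0 + M i 1 = 1) :
    (1 / 8) * ∑ a : Fin 2, ∑ b : Fin 2,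
      (((M 0 a * ρ a b).trace).re + ((M 1 b * ρ a b).trace).re)
    ≤ (1 / 2) * (1 + 1 / Real.sqrt 2) := by
  obtain ⟨t, a, b, c, hA, hA', hv⟩ := exists_bloch_povm (hM 0 0) (hM 0 1) (hPOVM 0)
  obtain ⟨t', a', b', c', hB, hB', hv'⟩ := exists_bloch_povm (hM 1 0) (hM 1 1) (hPOVM 1)
  obtain ⟨x0, y0, z0, h00, k00⟩ := exists_bloch_state (hρ 0 0)
  obtain ⟨x1, y1, z1, h01, k01⟩ := exists_bloch_state (hρ 0 1)
  obtain ⟨x2, y2, z2, h10, k10⟩ := exists_bloch_state (hρ 1 0)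
  obtain ⟨x3, y3, z3, h11, k11⟩ := exists_bloch_state (hρ 1 1)
  simp only [Fin.sum_univ_two, hA, hA', hB, hB', h00, h01, h10, h11, trace_bloch_mul]
  have i0 := inner_le x0 y0 z0 (a + a') (b + b') (c + c') k00
  have i1 := inner_le x1 y1 z1 (a - a') (b - b') (c - c') k01
  have i2 := inner_le x2 y2 z2 (-a + a') (-b + b') (-c + c') k10
  have i3 := inner_le x3 y3 z3 (-a - a') (-b - b') (-c - c') k11
  have hs : 0 ≤ √2 := Real.sqrt_nonneg 2
  have m := mul_le_mul_of_nonneg_left (add_le_add hv hv') hs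
  have e : 1 / √2 = √2 / 2 := by
    rw [one_div, ← Real.sqrt_div_self]
  rw [e]
  linarith
end

section
/- Let m ≥ 2. For every qubit strategy for the (2,m) REC in which both decoding POVMs are effectively two-outcome, i.e. M_{ic} = 0 for all i ∈ {1,2} and all c ≥ 2, the average exclusion success probability satisfies p(REC) ≤ 1 − (2−√2)/m². Hence 1 − (2−√2)/m² is the maximum average success probability over all two-outcome-POVM qubit strategies for the (2,m) REC. -/
/-!
Since `Re Tr ρ = 1`, the success probability is `1 - (1/(2m²)) ∑ₐ T(a)` with
`T(a) = Re Tr[(M_{1a₁} + M_{2a₂}) ρₐ] ≥ 0`, so the task is to minimise `∑ₐ T(a)`.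

*Upper bound.* Keep only the four words with letters in `{0, 1}`. In Bloch coordinates,
`2 Re Tr(AB) = t(A) t(B) + b(A) · b(B)`. As `M_{i0} + M_{i1} = 1`, the two effects have opposite
Bloch vectors `±x` (for `i = 1`) and `±y` (for `i = 2`), of norm at most `1`, and the traces add up
to a constant: the four terms sum to `4 + ½ ∑ (±x ± y) · r`, the `r` being Bloch vectors of
states. This is at least `4 - |x + y| - |x - y| ≥ 4 - 2√2` by the parallelogram law.

*Attainment.* Measure in the eigenbases of `σ_z` and `σ_x`, and send the pure state whose Bloch
vector is opposite to the sum of the Bloch vectors of the two effects selected by `a`. Words with a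
letter `≥ 2` then contribute nothing, and each of the other four contributes `1 - 1/√2`.
-/

open Matrix
open scoped ComplexOrder

/-- A valid qubit strategy for the `(2,m)` REC: states are PSD with unit trace and the
two decoding `m`-outcome families are POVMs. -/
def IsQubitStrategyM (m : ℕ) (ρ : Fin m → Fin m → Matrix (Fin 2) (Fin 2) ℂ)
    (M : Fin 2 → Fin m → Matrix (Fin 2) (Fin 2) ℂ) : Prop :=
  (∀ a₁ a₂, (ρ a₁ a₂).PosSemidef ∧ (ρ a₁ a₂).trace = 1) ∧
  (∀ i c, (M i c).PosSemidef) ∧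
  (∀ i, ∑ c : Fin m, M i c = 1)

/-- Average exclusion success probability for the `(2,m)` REC with a qubit strategy. -/
noncomputable def pRECM (m : ℕ) (ρ : Fin m → Fin m → Matrix (Fin 2) (Fin 2) ℂ)
    (M : Fin 2 → Fin m → Matrix (Fin 2) (Fin 2) ℂ) : ℝ :=
  (1 / (2 * (m : ℝ) ^ 2)) * ∑ a₁ : Fin m, ∑ a₂ : Fin m, ∑ i : Fin 2,
    (((1 - M i (if i = 0 then a₁ else a₂)) * ρ a₁ a₂).trace).re

/-- Real part of the trace of a qubit operator. -/
noncomputable def blochT (A : Matrix (Fin 2) (Fin 2) ℂ) : ℝ := (A 0 0).re + (A 1 1).re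

/-- Bloch vector of a Hermitian qubit operator `A`, normalised as `Tr(A σ_j)`, so that
`A = (Tr A + b · σ) / 2`. -/
noncomputable def blochV (A : Matrix (Fin 2) (Fin 2) ℂ) : Fin 3 → ℝ :=
  ![(A 0 1).re + (A 1 0).re, (A 1 0).im - (A 0 1).im, (A 0 0).re - (A 1 1).re]

lemma bloch_trace_mul {A B : Matrix (Fin 2) (Fin 2) ℂ} (hA : A.IsHermitian)
    (hB : B.IsHermitian) :
    2 * (A * B).trace.re = blochT A * blochT B + (blochV A 0 * blochV B 0 +
      blochV A 1 * blochV B 1 + blochV A 2 * blochV B 2) := by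
  have a1 := hA.apply 0 1
  have a0 := hA.apply 0 0
  have a2 := hA.apply 1 1
  have b1 := hB.apply 0 1
  have b0 := hB.apply 0 0
  have b2 := hB.apply 1 1
  simp only [Complex.ext_iff, Complex.star_def, Complex.conj_re, Complex.conj_im] at *
  have e0 : (A 0 0).im = 0 := by linarith
  have e1 : (A 1 1).im = 0 := by linarith
  have e2 : (B 0 0).im = 0 := by linarith
  have e3 : (B 1 1).im = 0 := by linarith
  simp [blochT, blochV, Matrix.trace_fin_two, Matrix.mul_apply, Fin.sum_univ_two, e0, e1, e2, e3,
    a1.1, ← a1.2, b1.1, ← b1.2]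
  ring

/-- Positivity puts the Bloch vector in the ball of radius `Tr A`: `4 det A = t² - |b|²`. -/
lemma bloch_psd {A : Matrix (Fin 2) (Fin 2) ℂ} (hA : A.PosSemidef) :
    0 ≤ blochT A ∧ blochV A 0 ^ 2 + blochV A 1 ^ 2 + blochV A 2 ^ 2 ≤ blochT A ^ 2 := by
  have d := hA.det_nonneg
  have p0 := hA.diag_nonneg (i := 0)
  have p1 := hA.diag_nonneg (i := 1)
  have a1 := hA.1.apply 0 1
  rw [Matrix.det_fin_two] at d
  simp only [Complex.le_def, Complex.ext_iff, Complex.star_def, Complex.conj_re, Complex.conj_im,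
    Complex.sub_re, Complex.mul_re, Complex.zero_re, Complex.zero_im] at *
  have d1 := d.1
  rw [← p0.2, ← p1.2, a1.1, ← a1.2] at d1
  simp only [blochT, blochV]
  refine ⟨by linarith, ?_⟩
  simp [a1.1, ← a1.2]
  nlinarith

lemma trace_mul_psd_nonneg {A B : Matrix (Fin 2) (Fin 2) ℂ} (hA : A.PosSemidef)
    (hB : B.PosSemidef) : 0 ≤ (A * B).trace.re := by
  have h := bloch_trace_mul hA.1 hB.1
  obtain ⟨a0, a⟩ := bloch_psd hA
  obtain ⟨b0, b⟩ := bloch_psd hB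
  have cs : (blochV A 0 * blochV B 0 + blochV A 1 * blochV B 1 + blochV A 2 * blochV B 2) ^ 2
      ≤ (blochT A * blochT B) ^ 2 := by
    calc _ ≤ (blochV A 0 ^ 2 + blochV A 1 ^ 2 + blochV A 2 ^ 2) *
          (blochV B 0 ^ 2 + blochV B 1 ^ 2 + blochV B 2 ^ 2) := by
          nlinarith [sq_nonneg (blochV A 0 * blochV B 1 - blochV A 1 * blochV B 0),
            sq_nonneg (blochV A 0 * blochV B 2 - blochV A 2 * blochV B 0),
            sq_nonneg (blochV A 1 * blochV B 2 - blochV A 2 * blochV B 1)]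
      _ ≤ blochT A ^ 2 * blochT B ^ 2 := by gcongr
      _ = _ := by ring
  have := abs_le_of_sq_le_sq cs (by positivity)
  linarith [(abs_le.mp this).1]

/-- A two-outcome effect has Bloch vector in the unit ball, because both it and its
complement are positive. -/
lemma bloch_effect {A B : Matrix (Fin 2) (Fin 2) ℂ} (hA : A.PosSemidef) (hB : B.PosSemidef)
    (h : A + B = 1) : blochT B = 2 - blochT A ∧ (∀ j, blochV B j = -blochV A j) ∧
      blochV A 0 ^ 2 + blochV A 1 ^ 2 + blochV A 2 ^ 2 ≤ 1 := by
  obtain rfl : B = 1 - A := by rw [← h]; abel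
  have t : blochT (1 - A) = 2 - blochT A := by simp [blochT]; ring
  have v : ∀ j, blochV (1 - A) j = -blochV A j := by
    intro j
    fin_cases j <;> simp [blochV] <;> ring
  refine ⟨t, v, ?_⟩
  obtain ⟨a0, a⟩ := bloch_psd hA
  obtain ⟨b0, b⟩ := bloch_psd hB
  simp only [t, v, neg_sq] at b b0
  rcases le_total (blochT A) 1 with h1 | h1 <;> nlinarith

/-- Weighted Young inequality behind `v · r ≥ -|v|` for `|r| ≤ 1`; the weights are those for
which it is tight at `|v| = √2`. -/
lemma young {s a b c x y z : ℝ} (hs : s ^ 2 = 2) (h0 : 0 ≤ s) (hr : x ^ 2 + y ^ 2 + z ^ 2 ≤ 1) :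
    -(s / 4 * (a ^ 2 + b ^ 2 + c ^ 2)) - s / 2 ≤ a * x + b * y + c * z := by
  have h : 0 ≤ s / 4 * ((a + s * x) ^ 2 + (b + s * y) ^ 2 + (c + s * z) ^ 2) := by positivity
  have e : s / 4 * ((a + s * x) ^ 2 + (b + s * y) ^ 2 + (c + s * z) ^ 2) =
      s / 4 * (a ^ 2 + b ^ 2 + c ^ 2) + s ^ 2 / 2 * (a * x + b * y + c * z) +
      s ^ 2 * s / 4 * (x ^ 2 + y ^ 2 + z ^ 2) := by ring
  rw [e, hs] at h
  have := mul_le_mul_of_nonneg_left hr h0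
  linarith

/-- The four words with letters in `{0, 1}` fail with total weight at least `4 - 2√2`. -/
lemma four_words {A A' B B' r00 r01 r10 r11 : Matrix (Fin 2) (Fin 2) ℂ}
    (hA : A.PosSemidef) (hA' : A'.PosSemidef) (hB : B.PosSemidef) (hB' : B'.PosSemidef)
    (hAA : A + A' = 1) (hBB : B + B' = 1)
    (h00 : r00.PosSemidef ∧ r00.trace = 1) (h01 : r01.PosSemidef ∧ r01.trace = 1)
    (h10 : r10.PosSemidef ∧ r10.trace = 1) (h11 : r11.PosSemidef ∧ r11.trace = 1) :
    4 - 2 * √2 ≤ (A * r00).trace.re + (B * r00).trace.re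
      + ((A * r01).trace.re + (B' * r01).trace.re)
      + ((A' * r10).trace.re + (B * r10).trace.re)
      + ((A' * r11).trace.re + (B' * r11).trace.re) := by
  have st : ∀ {r : Matrix (Fin 2) (Fin 2) ℂ}, r.PosSemidef ∧ r.trace = 1 →
      blochT r = 1 ∧ blochV r 0 ^ 2 + blochV r 1 ^ 2 + blochV r 2 ^ 2 ≤ 1 := by
    intro r hr
    have t : blochT r = 1 := by
      have := congrArg Complex.re hr.2
      simpa [Matrix.trace_fin_two, blochT] using this
    have := (bloch_psd hr.1).2
    rw [t] at this
    exact ⟨t, by simpa using this⟩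
  obtain ⟨tA, vA, nA⟩ := bloch_effect hA hA' hAA
  obtain ⟨tB, vB, nB⟩ := bloch_effect hB hB' hBB
  have hs : √2 ^ 2 = (2 : ℝ) := Real.sq_sqrt (by norm_num)
  have h0 : 0 ≤ √(2 : ℝ) := Real.sqrt_nonneg 2
  have k1 := bloch_trace_mul hA.1 h00.1.1
  have k2 := bloch_trace_mul hB.1 h00.1.1
  have k3 := bloch_trace_mul hA.1 h01.1.1
  have k4 := bloch_trace_mul hB'.1 h01.1.1
  have k5 := bloch_trace_mul hA'.1 h10.1.1
  have k6 := bloch_trace_mul hB.1 h10.1.1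
  have k7 := bloch_trace_mul hA'.1 h11.1.1
  have k8 := bloch_trace_mul hB'.1 h11.1.1
  simp only [tA, tB, vA, vB, (st h00).1, (st h01).1, (st h10).1, (st h11).1] at k1 k2 k3 k4 k5 k6 k7 k8
  have y1 := young (a := blochV A 0 + blochV B 0) (b := blochV A 1 + blochV B 1)
    (c := blochV A 2 + blochV B 2) hs h0 (st h00).2
  have y2 := young (a := blochV A 0 - blochV B 0) (b := blochV A 1 - blochV B 1)
    (c := blochV A 2 - blochV B 2) hs h0 (st h01).2
  have y3 := young (a := -blochV A 0 + blochV B 0) (b := -blochV A 1 + blochV B 1)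
    (c := -blochV A 2 + blochV B 2) hs h0 (st h10).2
  have y4 := young (a := -blochV A 0 - blochV B 0) (b := -blochV A 1 - blochV B 1)
    (c := -blochV A 2 - blochV B 2) hs h0 (st h11).2
  have mA := mul_le_mul_of_nonneg_left nA h0
  have mB := mul_le_mul_of_nonneg_left nB h0
  linarith

/-- The success probability in terms of the failure weights `Re Tr(M ρ)`. -/
lemma pRECM_eq {m : ℕ} (hm : 2 ≤ m) {ρ : Fin m → Fin m → Matrix (Fin 2) (Fin 2) ℂ}
    {M : Fin 2 → Fin m → Matrix (Fin 2) (Fin 2) ℂ} (h : ∀ a b, (ρ a b).trace = 1) :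
    pRECM m ρ M = 1 - (1 / (2 * (m : ℝ) ^ 2)) *
      ∑ a, ∑ b, ((M 0 a * ρ a b).trace.re + (M 1 b * ρ a b).trace.re) := by
  have hm0 : (m : ℝ) ≠ 0 := by positivity
  have e : ∀ a b, ∑ i : Fin 2, (((1 - M i (if i = 0 then a else b)) * ρ a b).trace).re =
      2 - ((M 0 a * ρ a b).trace.re + (M 1 b * ρ a b).trace.re) := by
    intro a b
    simp [Fin.sum_univ_two, sub_mul, h]
  simp only [pRECM, e, Finset.sum_sub_distrib, Finset.sum_const, Finset.card_univ,
    Fintype.card_fin, nsmul_eq_mul]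
  field_simp

lemma upper_bound (m : ℕ) (hm : 2 ≤ m) (ρ : Fin m → Fin m → Matrix (Fin 2) (Fin 2) ℂ)
    (M : Fin 2 → Fin m → Matrix (Fin 2) (Fin 2) ℂ) (hS : IsQubitStrategyM m ρ M)
    (hM : ∀ i (c : Fin m), 2 ≤ (c : ℕ) → M i c = 0) :
    pRECM m ρ M ≤ 1 - (2 - Real.sqrt 2) / (m : ℝ) ^ 2 := by
  obtain ⟨hρ, hP, h1⟩ := hS
  rw [pRECM_eq hm fun a b => (hρ a b).2]
  have hm0 : (0 : ℝ) < m := by positivity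
  suffices H : 4 - 2 * √2 ≤
      ∑ a, ∑ b, ((M 0 a * ρ a b).trace.re + (M 1 b * ρ a b).trace.re) by
    have := mul_le_mul_of_nonneg_left H (by positivity : 0 ≤ 1 / (2 * (m : ℝ) ^ 2))
    have e : 1 / (2 * (m : ℝ) ^ 2) * (4 - 2 * √2) = (2 - √2) / (m : ℝ) ^ 2 := by
      field_simp
      ring
    linarith
  obtain ⟨n, rfl⟩ : ∃ n, m = n + 2 := ⟨m - 2, by omega⟩
  have hsum : ∀ i, M i 0 + M i 1 = 1 := by
    intro i
    have h := h1 i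
    rw [Fin.sum_univ_succ, Fin.sum_univ_succ, Finset.sum_eq_zero] at h
    · simpa using h
    · intro j _
      exact hM i _ (by simp)
  have nn : ∀ a b, 0 ≤ (M 0 a * ρ a b).trace.re + (M 1 b * ρ a b).trace.re := fun a b =>
    add_nonneg (trace_mul_psd_nonneg (hP 0 a) (hρ a b).1)
      (trace_mul_psd_nonneg (hP 1 b) (hρ a b).1)
  have two : ∀ f : Fin (n + 2) → ℝ, (∀ a, 0 ≤ f a) → f 0 + f 1 ≤ ∑ a, f a := by
    intro f hf
    rw [Fin.sum_univ_succ, Fin.sum_univ_succ]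
    have := Finset.sum_nonneg fun (j : Fin n) (_ : j ∈ Finset.univ) => hf j.succ.succ
    simp only [Fin.succ_zero_eq_one]
    linarith
  have s := two (fun a => ∑ b, ((M 0 a * ρ a b).trace.re + (M 1 b * ρ a b).trace.re))
    fun a => Finset.sum_nonneg fun b _ => nn a b
  have s0 := two _ (nn 0)
  have s1 := two _ (nn 1)
  have := four_words (hP 0 0) (hP 0 1) (hP 1 0) (hP 1 1) (hsum 0) (hsum 1)
    (hρ 0 0) (hρ 0 1) (hρ 1 0) (hρ 1 1)
  linarith

/-- The operator `(w + x σ_x + z σ_z) / 2`. -/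
noncomputable def qop (w x z : ℝ) : Matrix (Fin 2) (Fin 2) ℂ :=
  !![(((w + z) / 2 : ℝ) : ℂ), ((x / 2 : ℝ) : ℂ); ((x / 2 : ℝ) : ℂ), (((w - z) / 2 : ℝ) : ℂ)]

/-- A unit Bloch vector gives a rank-one projection, hence a positive operator. -/
lemma qop_psd {x z : ℝ} (h : x ^ 2 + z ^ 2 = 1) : (qop 1 x z).PosSemidef := by
  have h' : (x : ℂ) ^ 2 + (z : ℂ) ^ 2 = 1 := by exact_mod_cast h
  have e : (qop 1 x z)ᴴ * qop 1 x z = qop 1 x z := by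
    ext i j
    fin_cases i <;> fin_cases j <;>
      simp only [qop, Matrix.mul_apply, Fin.sum_univ_two, Matrix.conjTranspose_apply] <;>
      simp <;> first | ring1 | linear_combination h' / 4
  rw [← e]
  exact Matrix.posSemidef_conjTranspose_mul_self _

lemma qop_zero : qop 0 0 0 = 0 := by
  ext i j
  fin_cases i <;> fin_cases j <;> simp [qop]

lemma qop_trace (x z : ℝ) : (qop 1 x z).trace = 1 := by
  simp [qop, Matrix.trace_fin_two]
  ring

lemma qop_trace_mul (w x z w' x' z' : ℝ) :
    (qop w x z * qop w' x' z').trace.re = (w * w' + x * x' + z * z') / 2 := by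
  rw [Matrix.trace_fin_two]
  simp [qop, Matrix.mul_apply, Fin.sum_univ_two]
  ring

/-- Sign of the Bloch vector of the effect attached to a letter: `+1`, `-1`, and `0` for the
letters `≥ 2`, whose effect vanishes. -/
def sgnL (c : ℕ) : ℝ := if c = 0 then 1 else if c = 1 then -1 else 0

/-- Optimal measurements: `σ_z` for the first question and `σ_x` for the second. The weight
`sgnL c ^ 2` is `1` for `c < 2` and `0` otherwise. -/
noncomputable def optM (m : ℕ) (i : Fin 2) (c : Fin m) : Matrix (Fin 2) (Fin 2) ℂ :=
  if i = 0 then qop (sgnL c ^ 2) 0 (sgnL c) else qop (sgnL c ^ 2) (sgnL c) 0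

/-- Optimal states: the Bloch vector is opposite to the sum of those of the two selected effects,
and is `(0, 1)` when both of these effects vanish. -/
noncomputable def optR (m : ℕ) (a b : Fin m) : Matrix (Fin 2) (Fin 2) ℂ :=
  if 2 ≤ (a : ℕ) then
    if 2 ≤ (b : ℕ) then qop 1 0 1 else qop 1 (-sgnL b) 0
  else if 2 ≤ (b : ℕ) then qop 1 0 (-sgnL a) else qop 1 (-sgnL b / √2) (-sgnL a / √2)

lemma sgnL_sq {c : ℕ} (h : ¬ 2 ≤ c) : sgnL c ^ 2 = 1 := by
  have : c = 0 ∨ c = 1 := by omega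
  rcases this with rfl | rfl <;> simp [sgnL]

lemma sgnL_zero {c : ℕ} (h : 2 ≤ c) : sgnL c = 0 := by
  simp [sgnL, show c ≠ 0 by omega, show c ≠ 1 by omega]

lemma opt_strategy (m : ℕ) (hm : 2 ≤ m) : IsQubitStrategyM m (optR m) (optM m) := by
  have hs : √2 ^ 2 = (2 : ℝ) := Real.sq_sqrt (by norm_num)
  refine ⟨fun a b => ?_, fun i c => ?_, fun i => ?_⟩
  · unfold optR
    split_ifs with ha hb hb
    · exact ⟨qop_psd (by norm_num), qop_trace _ _⟩
    · exact ⟨qop_psd (by simp [sgnL_sq hb]), qop_trace _ _⟩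
    · exact ⟨qop_psd (by simp [sgnL_sq ha]), qop_trace _ _⟩
    · refine ⟨qop_psd ?_, qop_trace _ _⟩
      rw [div_pow, div_pow, neg_sq, neg_sq, sgnL_sq ha, sgnL_sq hb, hs]
      norm_num
  · unfold optM
    by_cases hc : 2 ≤ (c : ℕ)
    · simp [sgnL_zero hc, qop_zero, Matrix.PosSemidef.zero]
    · rw [sgnL_sq hc]
      split_ifs
      · exact qop_psd (by simp [sgnL_sq hc])
      · exact qop_psd (by simp [sgnL_sq hc])
  · obtain ⟨n, rfl⟩ : ∃ n, m = n + 2 := ⟨m - 2, by omega⟩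
    rw [Fin.sum_univ_succ, Fin.sum_univ_succ, Finset.sum_eq_zero]
    · unfold optM
      ext k l
      fin_cases i <;> fin_cases k <;> fin_cases l <;> simp [sgnL, qop] <;> norm_num
    · intro j _
      simp [optM, sgnL_zero (show 2 ≤ (j : ℕ) + 1 + 1 by omega), qop_zero]

lemma opt_value (m : ℕ) (hm : 2 ≤ m) :
    1 - (2 - Real.sqrt 2) / (m : ℝ) ^ 2 = pRECM m (optR m) (optM m) := by
  have hs : √2 ^ 2 = (2 : ℝ) := Real.sq_sqrt (by norm_num)
  have h0 : √(2 : ℝ) ≠ 0 := by positivity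
  rw [pRECM_eq hm fun a b => ((opt_strategy m hm).1 a b).2]
  have key : ∀ a b : Fin m, (optM m 0 a * optR m a b).trace.re +
      (optM m 1 b * optR m a b).trace.re = sgnL a ^ 2 * (sgnL b ^ 2 * (1 - √2 / 2)) := by
    intro a b
    simp only [optM, optR, if_true, one_ne_zero, if_false]
    split_ifs with ha hb hb
    · simp [qop_trace_mul, sgnL_zero ha, sgnL_zero hb]
    · rw [qop_trace_mul, qop_trace_mul, sgnL_zero ha]
      ring
    · rw [qop_trace_mul, qop_trace_mul, sgnL_zero hb]
      ring
    · have e : √2 / 2 = 1 / √2 := by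
        field_simp
        linarith
      have a2 := sgnL_sq ha
      have b2 := sgnL_sq hb
      rw [qop_trace_mul, qop_trace_mul, e]
      linear_combination (1 - 1 / √2) * (1 / 2 - sgnL b ^ 2) * a2 - (1 - 1 / √2) / 2 * b2
  simp only [key, ← Finset.mul_sum, ← Finset.sum_mul]
  have s : ∑ c : Fin m, sgnL c ^ 2 = 2 := by
    obtain ⟨n, rfl⟩ : ∃ n, m = n + 2 := ⟨m - 2, by omega⟩
    rw [Fin.sum_univ_succ, Fin.sum_univ_succ, Finset.sum_eq_zero]
    · simp [sgnL]
      norm_num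
    · intro j _
      simp [sgnL_zero (show 2 ≤ (j : ℕ) + 1 + 1 by omega)]
  have hm0 : (m : ℝ) ≠ 0 := by positivity
  rw [s]
  field_simp

/-- Every effectively two-outcome qubit strategy for the `(2,m)` REC has success
probability at most `1 - (2-√2)/m²`, and this value is the maximum over all such
strategies. -/
theorem stmt17 (m : ℕ) (hm : 2 ≤ m) :
    (∀ (ρ : Fin m → Fin m → Matrix (Fin 2) (Fin 2) ℂ)
      (M : Fin 2 → Fin m → Matrix (Fin 2) (Fin 2) ℂ),
      IsQubitStrategyM m ρ M →
      (∀ i (c : Fin m), 2 ≤ (c : ℕ) → M i c = 0) →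
      pRECM m ρ M ≤ 1 - (2 - Real.sqrt 2) / (m : ℝ) ^ 2) ∧
    IsGreatest
      {x : ℝ | ∃ (ρ : Fin m → Fin m → Matrix (Fin 2) (Fin 2) ℂ)
        (M : Fin 2 → Fin m → Matrix (Fin 2) (Fin 2) ℂ),
        IsQubitStrategyM m ρ M ∧
        (∀ i (c : Fin m), 2 ≤ (c : ℕ) → M i c = 0) ∧
        x = pRECM m ρ M}
      (1 - (2 - Real.sqrt 2) / (m : ℝ) ^ 2) := by
  refine ⟨upper_bound m hm, ⟨optR m, optM m, opt_strategy m hm, fun i c hc => ?_,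
    opt_value m hm⟩, ?_⟩
  · simp [optM, sgnL_zero hc, qop_zero]
  · rintro x ⟨ρ, M, hS, hM, rfl⟩
    exact upper_bound m hm ρ M hS hM
end
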